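/- Let H ∈ (0, 1/2) and C₀ > 0. There exists a constant C > 0 depending only on H and C₀ with the following property: for every T ≥ 1 and all measurable symmetric functions ρ₁, ρ₂ : ℝ × ℝ → ℝ (ρᵢ(x,y) = ρᵢ(y,x)) such that for all 0 ≤ s < t ≤ T one has |ρ₂(t,s)| ≤ C₀ · min(1, (t−s)^(2H−2)) and |ρ₁(t,s) − ρ₂(t,s)| ≤ C₀ · min(1, s^(2H−2), (t−s)^(H−1)), it holds that |∫∫∫_{0<r<s<t<T} (ρ₁(r,s)ρ₁(s,t)ρ₁(t,r) − ρ₂(r,s)ρ₂(s,t)ρ₂(t,r)) dr ds dt| ≤ C · T^H. -/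

import Mathlib

open MeasureTheory Real Set Filter

/-!
Replacing the factors of the cyclic product one at a time, every term of the difference contains a
factor `ρ₁ - ρ₂`, which is at most `f r` for the short-range kernel `f u = C₀ min 1 (u ^ (2H - 2))`.
The other two factors are bounded by kernels of `s`, `s - r`, `t - s` or `t - r`. Since the kernels
decrease and `f ≤ g` for the long-range kernel `g u = C₀ u ^ (H - 1)`, a bound `f s` may be replaced
by `f (s - r)`, and a bound `g (t - r)` by `g` of whichever of `s - r`, `t - s` does not occur yet.
Each term thus becomes a product of one kernel of each of `r`, `s - r`, `t - s`, with `g` occurring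
once. The shear `(r, s, t) ↦ (r, s - r, t - s)` preserves volume and factorises the integral; `f` is
integrable on the half-line, and the integral of `g` over `(0, T]` is `C₀ T ^ H / H`.
-/

theorem norm_mul_mul_sub_mul_mul_le {R : Type*} [NonUnitalSeminormedRing R] (a b c x y z : R) :
    ‖a * b * c - x * y * z‖ ≤ ‖a - x‖ * ‖y‖ * ‖c‖ + ‖a - x‖ * ‖b - y‖ * ‖c‖ +
      ‖x‖ * ‖b - y‖ * ‖c‖ + ‖x‖ * ‖y‖ * ‖c - z‖ := by
  have telescope : a * b * c - x * y * z = (a - x) * y * c + (a - x) * (b - y) * c +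
      x * (b - y) * c + x * y * (c - z) := by noncomm_ring
  rw [telescope]
  exact norm_add₄_le.trans (by gcongr <;> exact norm_mul₃_le)

section Increments

variable {G : Type*} [AddGroup G] [MeasurableSpace G] [MeasurableAdd₂ G] [MeasurableNeg G]

/-- The change of variables `(r, s, t) ↦ (r, s - r, t - s)` from three times to the first time and
the two successive increments. -/
def incrementsEquiv : G × G × G ≃ᵐ G × G × G where
  toFun p := (p.1, p.2.1 - p.1, p.2.2 - p.2.1)
  invFun q := (q.1, q.2.1 + q.1, q.2.2 + (q.2.1 + q.1))
  left_inv p := by simp only [sub_add_cancel]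
  right_inv q := by simp only [add_sub_cancel_right]
  measurable_toFun := by dsimp only [Equiv.coe_fn_mk]; fun_prop
  measurable_invFun := by dsimp only [Equiv.coe_fn_symm_mk]; fun_prop

theorem measurePreserving_incrementsEquiv (μ : Measure G) [SFinite μ] [μ.IsAddRightInvariant] :
    MeasurePreserving incrementsEquiv (μ.prod (μ.prod μ)) (μ.prod (μ.prod μ)) := by
  have shear (r : G) : MeasurePreserving (fun q : G × G => (q.1 - r, q.2 - q.1))
      (μ.prod μ) (μ.prod μ) :=
    ((measurePreserving_sub_right μ r).prod (.id μ)).comp (measurePreserving_prod_sub μ μ)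
  exact (MeasurePreserving.id μ).skew_product
    (g := fun (r : G) (q : G × G) => (q.1 - r, q.2 - q.1)) (by unfold Function.uncurry; fun_prop)
    (ae_of_all _ fun r => (shear r).map_eq)

variable {𝕜 : Type*} [RCLike 𝕜] {μ : Measure G} [SFinite μ] [μ.IsAddRightInvariant]

theorem integrableOn_mul_increments {f g h : G → 𝕜} {A B C : Set G} (hf : IntegrableOn f A μ)
    (hg : IntegrableOn g B μ) (hh : IntegrableOn h C μ) :
    IntegrableOn (fun p : G × G × G => f p.1 * (g (p.2.1 - p.1) * h (p.2.2 - p.2.1)))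
      (incrementsEquiv ⁻¹' A ×ˢ B ×ˢ C) (μ.prod (μ.prod μ)) := by
  have product : IntegrableOn (fun q : G × G × G => f q.1 * (g q.2.1 * h q.2.2)) (A ×ˢ B ×ˢ C)
      (μ.prod (μ.prod μ)) := by
    rw [IntegrableOn, ← Measure.prod_restrict, ← Measure.prod_restrict]
    exact hf.mul_prod (hg.mul_prod hh)
  exact ((measurePreserving_incrementsEquiv μ).integrableOn_comp_preimage
    incrementsEquiv.measurableEmbedding).2 product

theorem setIntegral_mul_increments (f g h : G → 𝕜) (A B C : Set G) :
    ∫ p in incrementsEquiv ⁻¹' A ×ˢ B ×ˢ C,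
        f p.1 * (g (p.2.1 - p.1) * h (p.2.2 - p.2.1)) ∂(μ.prod (μ.prod μ)) =
      (∫ u in A, f u ∂μ) * ((∫ u in B, g u ∂μ) * ∫ u in C, h u ∂μ) := by
  rw [← setIntegral_prod_mul g h, ← setIntegral_prod_mul f]
  exact (measurePreserving_incrementsEquiv μ).setIntegral_preimage_emb
    incrementsEquiv.measurableEmbedding (fun q => f q.1 * (g q.2.1 * h q.2.2)) _

end Increments

/-- The simplex of ordered times `0 < r < s < t < T`, over which cumulants are integrated. -/
def orderedSimplex (T : ℝ) : Set (ℝ × ℝ × ℝ) :=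
  {p | 0 < p.1 ∧ p.1 < p.2.1 ∧ p.2.1 < p.2.2 ∧ p.2.2 < T}

theorem measurableSet_orderedSimplex (T : ℝ) : MeasurableSet (orderedSimplex T) :=
  (measurableSet_lt measurable_const measurable_fst).inter <|
    (measurableSet_lt measurable_fst measurable_snd.fst).inter <|
      (measurableSet_lt measurable_snd.fst measurable_snd.snd).inter <|
        measurableSet_lt measurable_snd.snd measurable_const

theorem orderedSimplex_subset_preimage_incrementsEquiv (T : ℝ) :
    orderedSimplex T ⊆ incrementsEquiv ⁻¹' Ioc 0 T ×ˢ Ioc 0 T ×ˢ Ioc 0 T := by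
  rintro ⟨r, s, t⟩ ⟨hr, hrs, hst, ht⟩
  dsimp only at hr hrs hst ht
  refine ⟨⟨?_, ?_⟩, ⟨?_, ?_⟩, ?_, ?_⟩ <;> dsimp [incrementsEquiv] <;> linarith

section OrderedSimplex

variable {f g h : ℝ → ℝ} {T : ℝ}

theorem integrableOn_orderedSimplex_mul_increments (hf : IntegrableOn f (Ioc 0 T))
    (hg : IntegrableOn g (Ioc 0 T)) (hh : IntegrableOn h (Ioc 0 T)) :
    IntegrableOn (fun p : ℝ × ℝ × ℝ => f p.1 * (g (p.2.1 - p.1) * h (p.2.2 - p.2.1)))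
      (orderedSimplex T) :=
  (integrableOn_mul_increments hf hg hh).mono_set
    (orderedSimplex_subset_preimage_incrementsEquiv T)

theorem setIntegral_orderedSimplex_mul_increments_le (hf : IntegrableOn f (Ioc 0 T))
    (hg : IntegrableOn g (Ioc 0 T)) (hh : IntegrableOn h (Ioc 0 T))
    (hf₀ : ∀ u ∈ Ioc 0 T, 0 ≤ f u) (hg₀ : ∀ u ∈ Ioc 0 T, 0 ≤ g u)
    (hh₀ : ∀ u ∈ Ioc 0 T, 0 ≤ h u) :
    ∫ p in orderedSimplex T, f p.1 * (g (p.2.1 - p.1) * h (p.2.2 - p.2.1)) ≤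
      (∫ u in Ioc 0 T, f u) * ((∫ u in Ioc 0 T, g u) * ∫ u in Ioc 0 T, h u) := by
  have box_measurable : MeasurableSet
      (incrementsEquiv ⁻¹' Ioc 0 T ×ˢ Ioc 0 T ×ˢ Ioc 0 T : Set (ℝ × ℝ × ℝ)) :=
    incrementsEquiv.measurable
      (measurableSet_Ioc.prod (measurableSet_Ioc.prod measurableSet_Ioc))
  refine (setIntegral_mono_set (integrableOn_mul_increments hf hg hh) ?_
    (orderedSimplex_subset_preimage_incrementsEquiv T).eventuallyLE).trans_eq
      (setIntegral_mul_increments f g h _ _ _)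
  filter_upwards [ae_restrict_mem box_measurable] with p ⟨hr, hs, ht⟩
  exact mul_nonneg (hf₀ _ hr) (mul_nonneg (hg₀ _ hs) (hh₀ _ ht))

end OrderedSimplex

/-- The product `ρ(r, s) ρ(s, t) ρ(t, r)`: the integrand of the third cumulant of the quadratic
functional of a centred Gaussian process with covariance function `ρ`. -/
def cyclicProduct (ρ : ℝ × ℝ → ℝ) (p : ℝ × ℝ × ℝ) : ℝ :=
  ρ (p.1, p.2.1) * ρ (p.2.1, p.2.2) * ρ (p.2.2, p.1)

theorem measurable_cyclicProduct {ρ : ℝ × ℝ → ℝ} (hρ : Measurable ρ) :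
    Measurable (cyclicProduct ρ) := by
  unfold cyclicProduct
  fun_prop

section Kernels

variable {f g : ℝ → ℝ} {ρ₁ ρ₂ : ℝ × ℝ → ℝ} {T : ℝ}
  (hf : AntitoneOn f (Ioi 0)) (hg : AntitoneOn g (Ioi 0)) (hfg : ∀ u, 0 < u → f u ≤ g u)
  (hsymm₁ : ∀ x y, ρ₁ (x, y) = ρ₁ (y, x)) (hsymm₂ : ∀ x y, ρ₂ (x, y) = ρ₂ (y, x))
  (hρ₂ : ∀ s t, 0 < s → s < t → t ≤ T → |ρ₂ (t, s)| ≤ f (t - s))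
  (hdiff : ∀ s t, 0 < s → s < t → t ≤ T → |ρ₁ (t, s) - ρ₂ (t, s)| ≤ min (f s) (g (t - s)))
include hf hg hfg hsymm₁ hsymm₂ hρ₂ hdiff

theorem abs_cyclicProduct_sub_le {r s t : ℝ} (h : (r, s, t) ∈ orderedSimplex T) :
    |cyclicProduct ρ₁ (r, s, t) - cyclicProduct ρ₂ (r, s, t)| ≤
      5 * (f r * (f (s - r) * g (t - s))) + 2 * (f r * (g (s - r) * f (t - s))) := by
  obtain ⟨hr, hrs, hst, htT⟩ : 0 < r ∧ r < s ∧ s < t ∧ t < T := h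
  have hs : 0 < s := hr.trans hrs
  have hrt : r < t := hrs.trans hst
  have hsr : 0 < s - r := sub_pos.2 hrs
  have hts : 0 < t - s := sub_pos.2 hst
  have htr : 0 < t - r := sub_pos.2 hrt
  have ρ₂_sr := hρ₂ r s hr hrs (hst.trans htT).le
  have ρ₂_ts := hρ₂ s t hs hst htT.le
  have ρ₂_tr := (hρ₂ r t hr hrt htT.le).trans (hfg _ htr)
  have ⟨diff_sr, _⟩ := le_min_iff.1 (hdiff r s hr hrs (hst.trans htT).le)
  have ⟨diff_ts, _⟩ := le_min_iff.1 (hdiff s t hs hst htT.le)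
  have ⟨diff_tr, diff_tr'⟩ := le_min_iff.1 (hdiff r t hr hrt htT.le)
  have diff_ts_r : |ρ₁ (t, s) - ρ₂ (t, s)| ≤ f r := diff_ts.trans (hf hr hs hrs.le)
  have diff_ts_sr : |ρ₁ (t, s) - ρ₂ (t, s)| ≤ f (s - r) :=
    diff_ts.trans (hf hsr hs (by linarith))
  have ρ₁_tr : |ρ₁ (t, r)| ≤ 2 * g (t - r) := by
    linarith [abs_sub_abs_le_abs_sub (ρ₁ (t, r)) (ρ₂ (t, r))]
  have ρ₁_tr_sr : |ρ₁ (t, r)| ≤ 2 * g (s - r) := by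
    linarith [hg hsr htr (by linarith : s - r ≤ t - r)]
  have ρ₁_tr_ts : |ρ₁ (t, r)| ≤ 2 * g (t - s) := by
    linarith [hg hts htr (by linarith : t - s ≤ t - r)]
  have f_r_nonneg : 0 ≤ f r := (abs_nonneg _).trans diff_sr
  have f_sr_nonneg : 0 ≤ f (s - r) := (abs_nonneg _).trans ρ₂_sr
  have f_ts_nonneg : 0 ≤ f (t - s) := (abs_nonneg _).trans ρ₂_ts
  calc |cyclicProduct ρ₁ (r, s, t) - cyclicProduct ρ₂ (r, s, t)|
      = ‖ρ₁ (s, r) * ρ₁ (t, s) * ρ₁ (t, r) - ρ₂ (s, r) * ρ₂ (t, s) * ρ₂ (t, r)‖ := by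
        rw [hsymm₁ s r, hsymm₁ t s, hsymm₂ s r, hsymm₂ t s]; rfl
    _ ≤ _ := norm_mul_mul_sub_mul_mul_le ..
    _ ≤ f r * f (t - s) * (2 * g (s - r)) + f r * f (s - r) * (2 * g (t - s)) +
          f (s - r) * f r * (2 * g (t - s)) + f (s - r) * g (t - s) * f r := by
        have g_ts_nonneg := f_ts_nonneg.trans (hfg _ hts)
        have ρ₂_ts_le_g := ρ₂_ts.trans (hfg _ hts)
        simp only [Real.norm_eq_abs]
        gcongr
    _ = _ := by ring

theorem integrableOn_cyclicProduct_sub (hmeas₁ : Measurable ρ₁) (hmeas₂ : Measurable ρ₂)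
    (hf_int : IntegrableOn f (Ioc 0 T)) (hg_int : IntegrableOn g (Ioc 0 T)) :
    IntegrableOn (fun p => cyclicProduct ρ₁ p - cyclicProduct ρ₂ p) (orderedSimplex T) := by
  have ffg_int := (integrableOn_orderedSimplex_mul_increments hf_int hf_int hg_int).const_mul 5
  have fgf_int := (integrableOn_orderedSimplex_mul_increments hf_int hg_int hf_int).const_mul 2
  refine (ffg_int.add fgf_int).mono' ((measurable_cyclicProduct hmeas₁).sub
    (measurable_cyclicProduct hmeas₂)).aestronglyMeasurable ?_
  filter_upwards [ae_restrict_mem (measurableSet_orderedSimplex T)] with p hp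
  exact abs_cyclicProduct_sub_le hf hg hfg hsymm₁ hsymm₂ hρ₂ hdiff hp

theorem setIntegral_abs_cyclicProduct_sub_le (hmeas₁ : Measurable ρ₁) (hmeas₂ : Measurable ρ₂)
    (hf₀ : ∀ u, 0 < u → 0 ≤ f u)
    (hf_int : IntegrableOn f (Ioc 0 T)) (hg_int : IntegrableOn g (Ioc 0 T)) :
    ∫ p in orderedSimplex T, |cyclicProduct ρ₁ p - cyclicProduct ρ₂ p| ≤
      7 * (∫ u in Ioc 0 T, f u) ^ 2 * ∫ u in Ioc 0 T, g u := by
  have f_nonneg : ∀ u ∈ Ioc 0 T, 0 ≤ f u := fun u hu => hf₀ u hu.1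
  have g_nonneg : ∀ u ∈ Ioc 0 T, 0 ≤ g u := fun u hu => (f_nonneg u hu).trans (hfg u hu.1)
  have ffg_int := (integrableOn_orderedSimplex_mul_increments hf_int hf_int hg_int).const_mul 5
  have fgf_int := (integrableOn_orderedSimplex_mul_increments hf_int hg_int hf_int).const_mul 2
  have diff_int := integrableOn_cyclicProduct_sub hf hg hfg hsymm₁ hsymm₂ hρ₂ hdiff
    hmeas₁ hmeas₂ hf_int hg_int
  calc ∫ p in orderedSimplex T, |cyclicProduct ρ₁ p - cyclicProduct ρ₂ p|
      ≤ _ := setIntegral_mono_on diff_int.abs (ffg_int.add fgf_int) (measurableSet_orderedSimplex T)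
        fun _ hp => abs_cyclicProduct_sub_le hf hg hfg hsymm₁ hsymm₂ hρ₂ hdiff hp
    _ = _ := integral_add ffg_int fgf_int
    _ ≤ 5 * ((∫ u in Ioc 0 T, f u) * ((∫ u in Ioc 0 T, f u) * ∫ u in Ioc 0 T, g u)) +
          2 * ((∫ u in Ioc 0 T, f u) * ((∫ u in Ioc 0 T, g u) * ∫ u in Ioc 0 T, f u)) := by
        rw [integral_const_mul, integral_const_mul]
        gcongr
        · exact setIntegral_orderedSimplex_mul_increments_le hf_int hf_int hg_int
            f_nonneg f_nonneg g_nonneg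
        · exact setIntegral_orderedSimplex_mul_increments_le hf_int hg_int hf_int
            f_nonneg g_nonneg f_nonneg
    _ = _ := by ring

end Kernels

section PowerKernels

variable {a : ℝ}

theorem min_one_rpow_nonneg {u : ℝ} (hu : 0 ≤ u) : 0 ≤ min 1 (u ^ a) :=
  le_min zero_le_one (rpow_nonneg hu a)

theorem antitoneOn_min_one_rpow (ha : a ≤ 0) : AntitoneOn (fun u : ℝ => min 1 (u ^ a)) (Ioi 0) :=
  antitoneOn_const.min (antitoneOn_rpow_Ioi_of_exponent_nonpos ha)

theorem min_one_rpow_le_rpow {b u : ℝ} (hab : a ≤ b) (hb : b ≤ 0) (hu : 0 < u) :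
    min 1 (u ^ a) ≤ u ^ b := by
  rcases le_total u 1 with h | h
  · exact min_le_of_left_le (one_le_rpow_of_pos_of_le_one_of_nonpos hu h hb)
  · exact min_le_of_right_le (rpow_le_rpow_of_exponent_le h hab)

theorem eqOn_Ioc_min_one_rpow (ha : a ≤ 0) :
    EqOn (fun u : ℝ => min 1 (u ^ a)) (fun _ => 1) (Ioc 0 1) :=
  fun _ hu => min_eq_left (one_le_rpow_of_pos_of_le_one_of_nonpos hu.1 hu.2 ha)

theorem eqOn_Ioi_min_one_rpow (ha : a ≤ 0) :
    EqOn (fun u : ℝ => min 1 (u ^ a)) (fun u => u ^ a) (Ioi 1) :=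
  fun _ hu => min_eq_right (rpow_le_one_of_one_le_of_nonpos (mem_Ioi.1 hu).le ha)

theorem integrableOn_Ioc_min_one_rpow (ha : a ≤ 0) :
    IntegrableOn (fun u : ℝ => min 1 (u ^ a)) (Ioc 0 1) :=
  (integrableOn_const (by simp)).congr_fun (eqOn_Ioc_min_one_rpow ha).symm measurableSet_Ioc

theorem integrableOn_Ioi_one_min_one_rpow (ha : a < -1) :
    IntegrableOn (fun u : ℝ => min 1 (u ^ a)) (Ioi 1) :=
  (integrableOn_Ioi_rpow_of_lt ha zero_lt_one).congr_fun
    (eqOn_Ioi_min_one_rpow (by linarith)).symm measurableSet_Ioi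

theorem integrableOn_Ioi_zero_min_one_rpow (ha : a < -1) :
    IntegrableOn (fun u : ℝ => min 1 (u ^ a)) (Ioi 0) := by
  rw [← Ioc_union_Ioi_eq_Ioi (zero_le_one' ℝ)]
  exact (integrableOn_Ioc_min_one_rpow (by linarith)).union (integrableOn_Ioi_one_min_one_rpow ha)

theorem integral_Ioi_zero_min_one_rpow (ha : a < -1) :
    ∫ u : ℝ in Ioi 0, min 1 (u ^ a) = a / (a + 1) := by
  have ha₀ : a ≤ 0 := by linarith
  have ha₁ : a + 1 ≠ 0 := by linarith
  rw [← Ioc_union_Ioi_eq_Ioi (zero_le_one' ℝ),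
    setIntegral_union (Ioc_disjoint_Ioi le_rfl) measurableSet_Ioi
      (integrableOn_Ioc_min_one_rpow ha₀) (integrableOn_Ioi_one_min_one_rpow ha),
    setIntegral_congr_fun measurableSet_Ioc (eqOn_Ioc_min_one_rpow ha₀),
    setIntegral_congr_fun measurableSet_Ioi (eqOn_Ioi_min_one_rpow ha₀),
    integral_Ioi_rpow_of_lt ha zero_lt_one]
  simp only [setIntegral_const, volume_real_Ioc_of_le zero_le_one, one_rpow, smul_eq_mul]
  field

theorem setIntegral_Ioc_zero_min_one_rpow_le (ha : a < -1) (T : ℝ) :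
    ∫ u in Ioc 0 T, min 1 (u ^ a) ≤ a / (a + 1) := by
  rw [← integral_Ioi_zero_min_one_rpow ha]
  refine setIntegral_mono_set (integrableOn_Ioi_zero_min_one_rpow ha) ?_
    Ioc_subset_Ioi_self.eventuallyLE
  filter_upwards [ae_restrict_mem measurableSet_Ioi] with u hu
  exact min_one_rpow_nonneg (mem_Ioi.1 hu).le

theorem integrableOn_Ioc_rpow (ha : -1 < a) (T : ℝ) :
    IntegrableOn (fun u : ℝ => u ^ a) (Ioc 0 T) :=
  (intervalIntegral.intervalIntegrable_rpow' ha).1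

theorem integral_Ioc_rpow {T : ℝ} (ha : -1 < a) (hT : 0 ≤ T) :
    ∫ u in Ioc 0 T, u ^ a = T ^ (a + 1) / (a + 1) := by
  rw [← intervalIntegral.integral_of_le hT, integral_rpow (.inl ha),
    zero_rpow (by linarith), sub_zero]

theorem sq_setIntegral_min_one_rpow_mul_setIntegral_rpow_le {H T : ℝ}
    (hH : H ∈ Ioo (0 : ℝ) (1 / 2)) (hT : 0 ≤ T) :
    (∫ u in Ioc 0 T, min 1 (u ^ (2 * H - 2))) ^ 2 * ∫ u in Ioc 0 T, u ^ (H - 1) ≤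
      ((2 - 2 * H) / (1 - 2 * H)) ^ 2 * (T ^ H / H) := by
  obtain ⟨hH₀, hH₁⟩ := hH
  have short_nonneg : 0 ≤ ∫ u in Ioc 0 T, min 1 (u ^ (2 * H - 2)) :=
    setIntegral_nonneg measurableSet_Ioc fun u hu => min_one_rpow_nonneg hu.1.le
  have short_le : ∫ u in Ioc 0 T, min 1 (u ^ (2 * H - 2)) ≤ (2 - 2 * H) / (1 - 2 * H) := by
    refine (setIntegral_Ioc_zero_min_one_rpow_le (by linarith) T).trans_eq ?_
    rw [← neg_div_neg_eq]
    ring_nf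
  have long_eq : ∫ u in Ioc 0 T, u ^ (H - 1) = T ^ H / H := by
    rw [integral_Ioc_rpow (by linarith) hT, sub_add_cancel]
  rw [long_eq]
  gcongr

end PowerKernels

theorem third_cumulant_difference_bound_general {H C₀ T : ℝ} (hH : H ∈ Ioo (0 : ℝ) (1 / 2))
    (hC₀ : 0 ≤ C₀) (hT : 0 ≤ T) {ρ₁ ρ₂ : ℝ × ℝ → ℝ}
    (hmeas₁ : Measurable ρ₁) (hmeas₂ : Measurable ρ₂)
    (hsymm₁ : ∀ x y, ρ₁ (x, y) = ρ₁ (y, x)) (hsymm₂ : ∀ x y, ρ₂ (x, y) = ρ₂ (y, x))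
    (hρ₂ : ∀ s t, 0 < s → s < t → t ≤ T → |ρ₂ (t, s)| ≤ C₀ * min 1 ((t - s) ^ (2 * H - 2)))
    (hdiff : ∀ s t, 0 < s → s < t → t ≤ T → |ρ₁ (t, s) - ρ₂ (t, s)| ≤
      C₀ * min 1 (min (s ^ (2 * H - 2)) ((t - s) ^ (H - 1)))) :
    IntegrableOn (fun p => cyclicProduct ρ₁ p - cyclicProduct ρ₂ p) (orderedSimplex T) ∧
      ∫ p in orderedSimplex T, |cyclicProduct ρ₁ p - cyclicProduct ρ₂ p| ≤
        7 * C₀ ^ 3 * ((2 - 2 * H) / (1 - 2 * H)) ^ 2 / H * T ^ H := by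
  obtain ⟨hH₀, hH₁⟩ := hH
  let f : ℝ → ℝ := fun u => C₀ * min 1 (u ^ (2 * H - 2))
  let g : ℝ → ℝ := fun u => C₀ * u ^ (H - 1)
  have f_nonneg (u : ℝ) (hu : 0 < u) : 0 ≤ f u := mul_nonneg hC₀ (min_one_rpow_nonneg hu.le)
  have f_le_g (u : ℝ) (hu : 0 < u) : f u ≤ g u :=
    mul_le_mul_of_nonneg_left (min_one_rpow_le_rpow (by linarith) (by linarith) hu) hC₀
  have f_antitone : AntitoneOn f (Ioi 0) :=
    (monotone_mul_left_of_nonneg hC₀).comp_antitoneOn (antitoneOn_min_one_rpow (by linarith))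
  have g_antitone : AntitoneOn g (Ioi 0) := (monotone_mul_left_of_nonneg hC₀).comp_antitoneOn
    (antitoneOn_rpow_Ioi_of_exponent_nonpos (by linarith))
  have f_int : IntegrableOn f (Ioc 0 T) := Integrable.const_mul
    ((integrableOn_Ioi_zero_min_one_rpow (by linarith)).mono_set Ioc_subset_Ioi_self) C₀
  have g_int : IntegrableOn g (Ioc 0 T) := (integrableOn_Ioc_rpow (by linarith) T).const_mul C₀
  have hdiff_le_min (s t : ℝ) (hs : 0 < s) (hst : s < t) (ht : t ≤ T) :
      |ρ₁ (t, s) - ρ₂ (t, s)| ≤ min (f s) (g (t - s)) := by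
    rw [← mul_min_of_nonneg _ _ hC₀, min_assoc]
    exact hdiff s t hs hst ht
  refine ⟨integrableOn_cyclicProduct_sub f_antitone g_antitone f_le_g hsymm₁ hsymm₂ hρ₂
    hdiff_le_min hmeas₁ hmeas₂ f_int g_int, ?_⟩
  calc ∫ p in orderedSimplex T, |cyclicProduct ρ₁ p - cyclicProduct ρ₂ p|
      ≤ 7 * (∫ u in Ioc 0 T, f u) ^ 2 * ∫ u in Ioc 0 T, g u :=
        setIntegral_abs_cyclicProduct_sub_le f_antitone g_antitone f_le_g hsymm₁ hsymm₂ hρ₂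
          hdiff_le_min hmeas₁ hmeas₂ f_nonneg f_int g_int
    _ = 7 * C₀ ^ 3 * ((∫ u in Ioc 0 T, min 1 (u ^ (2 * H - 2))) ^ 2 *
          ∫ u in Ioc 0 T, u ^ (H - 1)) := by
        rw [integral_const_mul, integral_const_mul]
        ring
    _ ≤ 7 * C₀ ^ 3 * (((2 - 2 * H) / (1 - 2 * H)) ^ 2 * (T ^ H / H)) := by
        have kernels_le := sq_setIntegral_min_one_rpow_mul_setIntegral_rpow_le ⟨hH₀, hH₁⟩ hT
        exact mul_le_mul_of_nonneg_left kernels_le (by positivity)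
    _ = 7 * C₀ ^ 3 * ((2 - 2 * H) / (1 - 2 * H)) ^ 2 / H * T ^ H := by ring

/-- Difference of third cumulants: under the covariance bounds, the integral of
`ρ₁(r,s)ρ₁(s,t)ρ₁(t,r) - ρ₂(r,s)ρ₂(s,t)ρ₂(t,r)` over the simplex
`{0 < r < s < t < T}` is bounded by `C ⬝ T^H`. -/
theorem third_cumulant_difference_bound (H C₀ : ℝ) (hH : H ∈ Set.Ioo (0 : ℝ) (1/2))
    (hC₀ : 0 < C₀) :
    ∃ C : ℝ, 0 < C ∧ ∀ T : ℝ, 1 ≤ T → ∀ ρ₁ ρ₂ : ℝ × ℝ → ℝ,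
      Measurable ρ₁ → Measurable ρ₂ →
      (∀ x y : ℝ, ρ₁ (x, y) = ρ₁ (y, x)) →
      (∀ x y : ℝ, ρ₂ (x, y) = ρ₂ (y, x)) →
      (∀ s t : ℝ, 0 ≤ s → s < t → t ≤ T →
        |ρ₂ (t, s)| ≤ C₀ * min 1 ((t - s) ^ (2 * H - 2))) →
      (∀ s t : ℝ, 0 ≤ s → s < t → t ≤ T →
        |ρ₁ (t, s) - ρ₂ (t, s)| ≤
          C₀ * min 1 (min (s ^ (2 * H - 2)) ((t - s) ^ (H - 1)))) →
      |∫ p in {p : ℝ × ℝ × ℝ | 0 < p.1 ∧ p.1 < p.2.1 ∧ p.2.1 < p.2.2 ∧ p.2.2 < T},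
          (ρ₁ (p.1, p.2.1) * ρ₁ (p.2.1, p.2.2) * ρ₁ (p.2.2, p.1)
            - ρ₂ (p.1, p.2.1) * ρ₂ (p.2.1, p.2.2) * ρ₂ (p.2.2, p.1))| ≤ C * T ^ H := by
  have hH₀ := hH.1
  have one_sub_pos : 0 < 1 - 2 * H := by linarith [hH.2]
  have two_sub_pos : 0 < 2 - 2 * H := by linarith
  exact ⟨_, by positivity, fun T hT ρ₁ ρ₂ hmeas₁ hmeas₂ hsymm₁ hsymm₂ hρ₂ hdiff =>
    abs_integral_le_integral_abs.trans
      (third_cumulant_difference_bound_general hH hC₀.le (zero_le_one.trans hT) hmeas₁ hmeas₂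
        hsymm₁ hsymm₂ (fun s t hs => hρ₂ s t hs.le) (fun s t hs => hdiff s t hs.le)).2⟩
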